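/- arXiv:math/0412090 — 5 statements merged into one kernel-verified Lean document; each statement's English description precedes it below -/
import Mathlib

section
/- Let w be a positive even integer, let E be a weighted Dedekind symbol of weight w, and let n be a positive integer. Then T_n E is again a weighted Dedekind symbol of weight w; that is, (T_n E)(h,k+h) = (T_n E)(h,k) for all (h,k) ∈ ℤ⁺×ℤ, and (T_n E)(ch,ck) = c^w·(T_n E)(h,k) for all (h,k) ∈ ℤ⁺×ℤ and all c ∈ ℤ⁺. -/
/-- A weighted Dedekind symbol of weight `w`: a function `E : ℤ⁺ × ℤ → ℂ`
(encoded as `E : ℤ → ℤ → ℂ`, with conditions imposed only for positive first argument)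
satisfying `E(h, k+h) = E(h, k)` and `E(ch, ck) = c^w · E(h, k)`. -/
def IsDedekindSymbol (w : ℕ) (E : ℤ → ℤ → ℂ) : Prop :=
  (∀ h k : ℤ, 0 < h → E h (k + h) = E h k) ∧
  (∀ h k c : ℤ, 0 < h → 0 < c → E (c * h) (c * k) = (c : ℂ) ^ w * E h k)

/-- The Hecke operator `(T_n E)(h,k) = ∑_{ad = n, d > 0} ∑_{b=0}^{d-1} E(dh, ak + bh)`. -/
noncomputable def HeckeT (n : ℕ) (E : ℤ → ℤ → ℂ) : ℤ → ℤ → ℂ :=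
  fun h k => ∑ d ∈ n.divisors, ∑ b ∈ Finset.range d,
    E ((d : ℤ) * h) (((n / d : ℕ) : ℤ) * k + (b : ℤ) * h)

/-!
Fix `a * d = n`. Since `E (d * h)` has period `d * h`, summing its translates by `b * h` over
`0 ≤ b < d` yields a function of period `h`, because a translation by `h` only permutes the terms
cyclically. Evaluated at `a * k`, this sum is unchanged by `k ↦ k + h`, which moves `a * k` by
`a * h`. Homogeneity passes to the sum term by term.
-/

theorem periodic_sum_range_nsmul {α M : Type*} [AddMonoid α] [AddCommMonoid M]
    {f : α → M} {c : α} {d : ℕ} (hf : Function.Periodic f (d • c)) :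
    Function.Periodic (fun x => ∑ b ∈ Finset.range d, f (x + b • c)) c := by
  intro x
  have shift (b : ℕ) : f (x + c + b • c) = f (x + (b + 1) • c) := by
    rw [succ_nsmul', add_assoc]
  simp only [shift]
  cases d with
  | zero => simp only [Finset.range_zero, Finset.sum_empty]
  | succ d =>
    have wrap : f (x + (d + 1) • c) = f (x + 0 • c) := by rw [hf x, zero_nsmul, add_zero]
    rw [Finset.sum_range_succ, wrap, ← Finset.sum_range_succ' fun b => f (x + b • c)]

/-- The part of the Hecke operator belonging to a single factorization `n = a * d`, namely
`E ↦ ∑_{b=0}^{d-1} E(dh, ak + bh)`; the numbers `a` and `d` are arbitrary here. -/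
noncomputable def heckeSummand (a : ℤ) (d : ℕ) (E : ℤ → ℤ → ℂ) (h k : ℤ) : ℂ :=
  ∑ b ∈ Finset.range d, E (d * h) (a * k + b * h)

namespace IsDedekindSymbol

variable {w : ℕ}

protected theorem sum {ι : Type*} {s : Finset ι} {F : ι → ℤ → ℤ → ℂ}
    (hF : ∀ i ∈ s, IsDedekindSymbol w (F i)) :
    IsDedekindSymbol w (fun h k => ∑ i ∈ s, F i h k) := by
  refine ⟨fun h k hh => Finset.sum_congr rfl fun i hi => (hF i hi).1 h k hh,
    fun h k c hh hc => ?_⟩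
  rw [Finset.mul_sum]
  exact Finset.sum_congr rfl fun i hi => (hF i hi).2 h k c hh hc

variable {E : ℤ → ℤ → ℂ}

theorem periodic (hE : IsDedekindSymbol w E) {h : ℤ} (hh : 0 < h) :
    Function.Periodic (E h) h :=
  fun k => hE.1 h k hh

theorem heckeSummand_add_self (hE : IsDedekindSymbol w E) (a : ℤ) {d : ℕ} (hd : 0 < d)
    {h : ℤ} (hh : 0 < h) (k : ℤ) :
    heckeSummand a d E h (k + h) = heckeSummand a d E h k := by
  have period_dh : Function.Periodic (E (d * h)) (d • h) := by
    rw [nsmul_eq_mul]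
    exact hE.periodic (by positivity)
  have period_h : Function.Periodic
      (fun x => ∑ b ∈ Finset.range d, E (d * h) (x + b * h)) h := by
    simpa only [nsmul_eq_mul] using periodic_sum_range_nsmul period_dh
  simpa only [heckeSummand, mul_add, Int.cast_id] using period_h.int_mul a (a * k)

theorem heckeSummand_mul_mul (hE : IsDedekindSymbol w E) (a : ℤ) {d : ℕ} (hd : 0 < d)
    {h c : ℤ} (hh : 0 < h) (hc : 0 < c) (k : ℤ) :
    heckeSummand a d E (c * h) (c * k) = (c : ℂ) ^ w * heckeSummand a d E h k := by
  unfold heckeSummand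
  rw [Finset.mul_sum]
  refine Finset.sum_congr rfl fun b _ => ?_
  calc E (d * (c * h)) (a * (c * k) + b * (c * h))
      = E (c * (d * h)) (c * (a * k + b * h)) := by congr 1 <;> ring
    _ = (c : ℂ) ^ w * E (d * h) (a * k + b * h) := hE.2 _ _ c (by positivity) hc

protected theorem heckeSummand (hE : IsDedekindSymbol w E) (a : ℤ) {d : ℕ} (hd : 0 < d) :
    IsDedekindSymbol w (heckeSummand a d E) :=
  ⟨fun _ k hh => hE.heckeSummand_add_self a hd hh k,
    fun _ k _ hh hc => hE.heckeSummand_mul_mul a hd hh hc k⟩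

end IsDedekindSymbol

theorem heckeT_isDedekindSymbol_general {w : ℕ} (n : ℕ) {E : ℤ → ℤ → ℂ}
    (hE : IsDedekindSymbol w E) : IsDedekindSymbol w (HeckeT n E) :=
  IsDedekindSymbol.sum fun d hd => hE.heckeSummand (n / d : ℕ) (Nat.pos_of_mem_divisors hd)

theorem heckeT_isDedekindSymbol (w : ℕ) (hw : Even w) (hw0 : 0 < w)
    (n : ℕ) (hn : 0 < n) (E : ℤ → ℤ → ℂ) (hE : IsDedekindSymbol w E) :
    IsDedekindSymbol w (HeckeT n E) :=
  heckeT_isDedekindSymbol_general n hE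
end

section
/- Let w be a positive even integer and n a positive integer. If E is an odd (resp. even) weighted Dedekind symbol of weight w, then T_n E is also odd (resp. even); that is, if E(h,−k) = −E(h,k) for all (h,k) ∈ ℤ⁺×ℤ then (T_n E)(h,−k) = −(T_n E)(h,k) for all (h,k) ∈ ℤ⁺×ℤ, and if E(h,−k) = E(h,k) for all (h,k) then (T_n E)(h,−k) = (T_n E)(h,k) for all (h,k). -/
/-! The divisor-`d` part of `T_n E` sums `E(dh, ·)` over the progression `ak + bh` with `b` running
modulo `d`. Negating `k` and applying the parity of `E` turns `ak + bh` into `ak - bh`, and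
`b ↦ -b` permutes the residues modulo `d`. -/

theorem sum_range_sub_nsmul_of_periodic {G M : Type*} [AddGroup G] [AddCommMonoid M]
    {f : G → M} {c : G} {d : ℕ} (hf : Function.Periodic f (d • c)) (x : G) :
    ∑ b ∈ Finset.range d, f (x - b • c) = ∑ b ∈ Finset.range d, f (x + b • c) := by
  cases d with
  | zero => rfl
  | succ m =>
    have shift_period (b : ℕ) (hb : b ∈ Finset.range m) :
        f (x - (b + 1) • c) = f (x + (m - 1 - b + 1) • c) := by
      have hsplit : m + 1 = (b + 1) + (m - 1 - b + 1) := by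
        have := Finset.mem_range.mp hb
        omega
      rw [← hf (x - (b + 1) • c), hsplit, add_nsmul c (b + 1), ← add_assoc, sub_add_cancel]
    rw [Finset.sum_range_succ', Finset.sum_range_succ', Finset.sum_congr rfl shift_period,
      Finset.sum_range_reflect (fun b ↦ f (x + (b + 1) • c)), zero_nsmul, sub_zero, add_zero]

theorem heckeT_parity_general (n : ℕ) (E : ℤ → ℤ → ℂ) (ε : ℂ)
    (periodic : ∀ h k : ℤ, 0 < h → E h (k + h) = E h k)
    (parity : ∀ h k : ℤ, 0 < h → E h (-k) = ε * E h k) (h k : ℤ) (hh : 0 < h) :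
    HeckeT n E h (-k) = ε * HeckeT n E h k := by
  simp only [HeckeT, Finset.mul_sum n.divisors]
  refine Finset.sum_congr rfl fun d hd ↦ ?_
  have hdh : 0 < (d : ℤ) * h := mul_pos (mod_cast Nat.pos_of_mem_divisors hd) hh
  have hper : Function.Periodic (E (d * h)) (d • h) := fun m ↦ by
    rw [nsmul_eq_mul, periodic _ m hdh]
  set a : ℤ := ((n / d : ℕ) : ℤ)
  calc ∑ b ∈ Finset.range d, E (d * h) (a * -k + b * h)
      = ∑ b ∈ Finset.range d, ε * E (d * h) (a * k - b • h) :=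
        Finset.sum_congr rfl fun b _ ↦ by
          rw [← parity _ _ hdh, neg_sub', mul_neg, nsmul_eq_mul, sub_neg_eq_add]
    _ = ε * ∑ b ∈ Finset.range d, E (d * h) (a * k + b * h) := by
        rw [← Finset.mul_sum, sum_range_sub_nsmul_of_periodic hper]
        simp only [nsmul_eq_mul]

theorem heckeT_parity (w : ℕ) (hw : Even w) (hw0 : 0 < w)
    (n : ℕ) (hn : 0 < n) (E : ℤ → ℤ → ℂ) (hE : IsDedekindSymbol w E) :
    ((∀ h k : ℤ, 0 < h → E h (-k) = -E h k) →
      ∀ h k : ℤ, 0 < h → HeckeT n E h (-k) = -HeckeT n E h k) ∧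
    ((∀ h k : ℤ, 0 < h → E h (-k) = E h k) →
      ∀ h k : ℤ, 0 < h → HeckeT n E h (-k) = HeckeT n E h k) := by
  refine ⟨fun odd ↦ ?_, fun even ↦ ?_⟩
  · simpa using heckeT_parity_general n E (-1) hE.1 (by simpa using odd)
  · simpa using heckeT_parity_general n E 1 hE.1 (by simpa using even)
end

section
/- Let w be a positive even integer and let E and E' be weighted Dedekind symbols of weight w satisfying E(h,k) − E(k,−h) = E'(h,k) − E'(k,−h) for all h,k ∈ ℤ⁺. Then there exists a constant c ∈ ℂ such that E(h,k) − E'(h,k) = c·gcd(h,k)^w for all (h,k) ∈ ℤ⁺×ℤ. -/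
/-!
Subtracting reduces the claim to a symbol `F` with `F h k = F k (-h)` for positive `h` and `k`.
Together with periodicity in `k`, this lets one run the Euclidean algorithm on the arguments of `F`:
`F h k = F h r = F r (-h)` with `r = k % h`, and so on until `F h k = F (gcd h k) 0`.
Homogeneity then gives `F (gcd h k) 0 = gcd h k ^ w • F 1 0`.
-/

section EuclideanAlgorithm

variable {α : Type*} {F : ℤ → ℤ → α}

theorem eq_apply_gcd_zero_of_periodic_of_reciprocal
    (hper : ∀ h : ℤ, 0 < h → Function.Periodic (F h) h)
    (hrec : ∀ h k : ℤ, 0 < h → 0 < k → F h k = F k (-h)) {h : ℤ} (hh : 0 < h) (k : ℤ) :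
    F h k = F (Int.gcd h k) 0 := by
  have apply_emod : F h (k % h) = F h k := by
    rw [Int.emod_def, mul_comm]
    exact (hper h hh).sub_int_mul_eq (k / h)
  obtain hr | hr := (Int.emod_nonneg k hh.ne').eq_or_lt
  · have hdvd : h ∣ k := Int.dvd_of_emod_eq_zero hr.symm
    rw [← apply_emod, ← hr, Int.gcd_eq_left hh.le hdvd]
  · calc
      F h k = F h (k % h) := apply_emod.symm
      _ = F (k % h) (-h) := hrec h (k % h) hh hr
      _ = F (Int.gcd (k % h) (-h)) 0 :=
        eq_apply_gcd_zero_of_periodic_of_reciprocal hper hrec hr (-h)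
      _ = F (Int.gcd h k) 0 := by rw [Int.gcd_neg, Int.gcd_emod, Int.gcd_comm]
termination_by h.toNat
decreasing_by
  have := Int.emod_lt_of_pos k hh
  omega

end EuclideanAlgorithm

/-- A weighted Dedekind symbol of weight `w` with values in an abelian group `M`; integers act on
`M` by repeated addition. As in `IsDedekindSymbol`, the first argument is an integer and the
conditions concern only its positive values. -/
structure IsGroupValuedDedekindSymbol {M : Type*} [AddCommGroup M] (w : ℕ) (E : ℤ → ℤ → M) :
    Prop where
  periodic : ∀ h : ℤ, 0 < h → Function.Periodic (E h) h
  homogeneous : ∀ h k c : ℤ, 0 < h → 0 < c → E (c * h) (c * k) = c ^ w • E h k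

theorem IsDedekindSymbol.isGroupValuedDedekindSymbol {w : ℕ} {E : ℤ → ℤ → ℂ}
    (hE : IsDedekindSymbol w E) : IsGroupValuedDedekindSymbol w E where
  periodic h hh k := hE.1 h k hh
  homogeneous h k c hh hc := by
    rw [hE.2 h k c hh hc, zsmul_eq_mul, Int.cast_pow]

namespace IsGroupValuedDedekindSymbol

variable {M : Type*} [AddCommGroup M] {w : ℕ} {E E' F : ℤ → ℤ → M}

protected theorem sub (hE : IsGroupValuedDedekindSymbol w E)
    (hE' : IsGroupValuedDedekindSymbol w E') : IsGroupValuedDedekindSymbol w (E - E') where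
  periodic h hh := (hE.periodic h hh).sub (hE'.periodic h hh)
  homogeneous h k c hh hc := by
    simp only [Pi.sub_apply, hE.homogeneous h k c hh hc, hE'.homogeneous h k c hh hc, smul_sub]

theorem apply_zero (hF : IsGroupValuedDedekindSymbol w F) {h : ℤ} (hh : 0 < h) :
    F h 0 = h ^ w • F 1 0 := by
  simpa only [mul_one, mul_zero] using hF.homogeneous 1 0 h one_pos hh

theorem eq_gcd_pow_smul_of_reciprocal (hF : IsGroupValuedDedekindSymbol w F)
    (hrec : ∀ h k : ℤ, 0 < h → 0 < k → F h k = F k (-h)) {h : ℤ} (hh : 0 < h) (k : ℤ) :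
    F h k = (Int.gcd h k : ℤ) ^ w • F 1 0 := by
  have gcd_pos : (0 : ℤ) < Int.gcd h k := mod_cast Int.gcd_pos_of_ne_zero_left k hh.ne'
  rw [eq_apply_gcd_zero_of_periodic_of_reciprocal hF.periodic hrec hh k, hF.apply_zero gcd_pos]

end IsGroupValuedDedekindSymbol

theorem dedekindSymbols_with_same_reciprocity_general {M : Type*} [AddCommGroup M] (w : ℕ)
    (E E' : ℤ → ℤ → M) (hE : IsGroupValuedDedekindSymbol w E)
    (hE' : IsGroupValuedDedekindSymbol w E')
    (hrec : ∀ h k : ℤ, 0 < h → 0 < k → E h k - E k (-h) = E' h k - E' k (-h)) :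
    ∃ c : M, ∀ h k : ℤ, 0 < h → E h k - E' h k = (Int.gcd h k : ℤ) ^ w • c := by
  have sub_reciprocal : ∀ h k : ℤ, 0 < h → 0 < k → (E - E') h k = (E - E') k (-h) :=
    fun h k hh hk => sub_eq_sub_iff_sub_eq_sub.mp (hrec h k hh hk)
  exact ⟨(E - E') 1 0, fun h k hh =>
    (hE.sub hE').eq_gcd_pow_smul_of_reciprocal sub_reciprocal hh k⟩

theorem dedekindSymbols_with_same_reciprocity (w : ℕ) (hw : Even w) (hw0 : 0 < w)
    (E E' : ℤ → ℤ → ℂ) (hE : IsDedekindSymbol w E) (hE' : IsDedekindSymbol w E')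
    (hrec : ∀ h k : ℤ, 0 < h → 0 < k → E h k - E k (-h) = E' h k - E' k (-h)) :
    ∃ c : ℂ, ∀ h k : ℤ, 0 < h →
      E h k - E' h k = c * ((Int.gcd h k : ℕ) : ℂ) ^ w := by
  simpa [mul_comm] using dedekindSymbols_with_same_reciprocity_general w E E'
    hE.isGroupValuedDedekindSymbol hE'.isGroupValuedDedekindSymbol hrec
end

section
/- Let w be a positive even integer and let g(X,Y) be a homogeneous polynomial of degree w+2 with complex coefficients satisfying the polynomial identity X·g(X+Y,Y) + Y·g(X,X+Y) = (X+Y)·g(X,Y). Then there exists a weighted Dedekind symbol E of weight w such that E(h,k) − E(k,−h) = (g(h,k) − g(1,1)·gcd(h,k)^{w+2})/(hk) for all h,k ∈ ℤ⁺. -/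
/-!
Put `f h k = (g(h,k) - g(1,1) gcd(h,k)^(w+2)) / (hk)`. Dividing the identity for `g` by
`xy(x+y)` gives the three-term relation `f(h+k,k) + f(h,h+k) = f(h,k)`; the `gcd` term satisfies
it as well, and the coefficient `g(1,1)` is the one which makes `f` vanish on the diagonal.

Periodicity and the equation `E(h,k) - E(k,-h) = f(h,k)` for `0 < k < h` determine `E` along the
Euclidean algorithm up to the values `E(h,0)`, which we take to be `0`. For `k > h`, periodicity
and the equation for `(k, k-h)` turn the reciprocity law at `(h,k)` into the one at `(h, k-h)`,
up to the three-term relation. Iterating, one lands on the diagonal, where both sides vanish, or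
at some `k < h`, where the law is the recursion defining `E`.
-/

open MvPolynomial

section EuclidSum

variable {M : Type*}

/-- The sum of the values of `f` along the Euclidean algorithm with sign changes
`(h, k) ↦ (k % h, -h)`, started at `(h, k)`; it is the candidate Dedekind symbol with reciprocity
function `f`. It takes the value `0` when `h ≤ 0`. -/
def euclidSum [AddZeroClass M] (f : ℤ → ℤ → M) (h k : ℤ) : M :=
  if 0 < h ∧ k % h ≠ 0 then f h (k % h) + euclidSum f (k % h) (-h) else 0
termination_by h.toNat
decreasing_by
  have := Int.emod_lt_of_pos k (by omega : 0 < h)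
  omega

theorem euclidSum_congr [AddZeroClass M] (f : ℤ → ℤ → M) {h k l : ℤ} (hkl : k ≡ l [ZMOD h]) :
    euclidSum f h k = euclidSum f h l := by
  rw [euclidSum, euclidSum.eq_def f h l, hkl.eq]

theorem euclidSum_of_dvd [AddZeroClass M] (f : ℤ → ℤ → M) {h k : ℤ} (hk : h ∣ k) :
    euclidSum f h k = 0 := by
  rw [euclidSum, if_neg fun hh => hh.2 (Int.emod_eq_zero_of_dvd hk)]

theorem euclidSum_of_lt [AddZeroClass M] (f : ℤ → ℤ → M) {h k : ℤ} (hk : 0 < k) (hkh : k < h) :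
    euclidSum f h k = f h k + euclidSum f k (-h) := by
  have hmod : k % h = k := Int.emod_eq_of_lt hk.le hkh
  rw [euclidSum, hmod, if_pos ⟨hk.trans hkh, hk.ne'⟩]

theorem euclidSum_mul_mul {R : Type*} [AddZeroClass M] [DistribSMul R M] {f : ℤ → ℤ → M} {c : ℤ}
    {a : R} (hc : 0 < c)
    (hf : ∀ h k : ℤ, 0 < h → 0 < k → f (c * h) (c * k) = a • f h k) (h k : ℤ) :
    euclidSum f (c * h) (c * k) = a • euclidSum f h k := by
  induction h, k using euclidSum.induct with
  | case1 h k hh ih =>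
    have hr : 0 < k % h := (Int.emod_nonneg k hh.1.ne').lt_of_ne' hh.2
    have hch : 0 < c * h ∧ c * (k % h) ≠ 0 := ⟨mul_pos hc hh.1, mul_ne_zero hc.ne' hh.2⟩
    rw [euclidSum, euclidSum.eq_def f h k, Int.mul_emod_mul_of_pos _ _ hc, if_pos hch, if_pos hh,
      hf _ _ hh.1 hr, ← mul_neg, ih, smul_add]
  | case2 h k hh =>
    have hch : ¬(0 < c * h ∧ c * (k % h) ≠ 0) := by
      simpa only [mul_pos_iff_of_pos_left hc, mul_ne_zero_iff_left hc.ne'] using hh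
    rw [euclidSum, euclidSum.eq_def f h k, Int.mul_emod_mul_of_pos _ _ hc, if_neg hch, if_neg hh,
      smul_zero]

theorem euclidSum_sub_euclidSum_neg [AddCommGroup M] {f : ℤ → ℤ → M}
    (hdiag : ∀ h : ℤ, 0 < h → f h h = 0)
    (hthree : ∀ h k : ℤ, 0 < h → 0 < k → f (h + k) k + f h (h + k) = f h k)
    (h k : ℤ) (hh : 0 < h) (hk : 0 < k) :
    euclidSum f h k - euclidSum f k (-h) = f h k := by
  rcases lt_trichotomy k h with hkh | rfl | hhk
  · rw [euclidSum_of_lt f hk hkh, add_sub_cancel_right]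
  · rw [euclidSum_of_dvd f dvd_rfl, euclidSum_of_dvd f (dvd_neg.mpr dvd_rfl), hdiag k hk, sub_zero]
  · have hperiod : euclidSum f h k = euclidSum f h (k - h) :=
      euclidSum_congr f (Int.modEq_iff_dvd.mpr ⟨-1, by ring⟩)
    have hstep : euclidSum f k (-h) = f k (k - h) + euclidSum f (k - h) (-h) := calc
      euclidSum f k (-h) = euclidSum f k (k - h) :=
        euclidSum_congr f (Int.modEq_iff_dvd.mpr ⟨1, by ring⟩)
      _ = f k (k - h) + euclidSum f (k - h) (-k) := euclidSum_of_lt f (by omega) (by omega)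
      _ = f k (k - h) + euclidSum f (k - h) (-h) := by
        rw [euclidSum_congr f (Int.modEq_iff_dvd.mpr ⟨1, by ring⟩ : -k ≡ -h [ZMOD k - h])]
    have hdescent : euclidSum f h (k - h) - euclidSum f (k - h) (-h) = f h (k - h) :=
      euclidSum_sub_euclidSum_neg hdiag hthree h (k - h) hh (by omega)
    have hrel : f k (k - h) + f h k = f h (k - h) := by
      simpa only [add_sub_cancel] using hthree h (k - h) hh (by omega)
    rw [hperiod, hstep, sub_add_eq_sub_sub_swap, hdescent, ← hrel, add_sub_cancel_left]
termination_by k.toNat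

end EuclidSum

theorem exists_isDedekindSymbol_of_threeTerm {w : ℕ} {f : ℤ → ℤ → ℂ}
    (hmul : ∀ c h k : ℤ, 0 < c → 0 < h → 0 < k → f (c * h) (c * k) = (c : ℂ) ^ w * f h k)
    (hdiag : ∀ h : ℤ, 0 < h → f h h = 0)
    (hthree : ∀ h k : ℤ, 0 < h → 0 < k → f (h + k) k + f h (h + k) = f h k) :
    ∃ E : ℤ → ℤ → ℂ, IsDedekindSymbol w E ∧
      ∀ h k : ℤ, 0 < h → 0 < k → E h k - E k (-h) = f h k :=
  ⟨euclidSum f,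
    ⟨fun _ _ _ => euclidSum_congr f Int.add_modEq_right,
      fun h k c _ hc => euclidSum_mul_mul (a := (c : ℂ) ^ w) hc (fun h k => hmul c h k hc) h k⟩,
    euclidSum_sub_euclidSum_neg hdiag hthree⟩

section ReciprocityFunction

variable {K : Type*} [Field K] {G : ℤ → ℤ → K} {n : ℕ} {c h k : ℤ}

/-- The reciprocity function of the Dedekind symbol attached to a `G` that is homogeneous of
degree `n`, normalized by a multiple of `gcd(h,k)^n` so as to vanish on the diagonal. -/
def reciprocityFunction (G : ℤ → ℤ → K) (n : ℕ) (h k : ℤ) : K :=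
  (G h k - G 1 1 * ((Int.gcd h k : ℕ) : K) ^ n) / ((h : K) * (k : K))

theorem reciprocityFunction_mul_mul [CharZero K] (hc : 0 < c)
    (hG : G (c * h) (c * k) = (c : K) ^ (n + 2) * G h k) :
    reciprocityFunction G (n + 2) (c * h) (c * k) =
      (c : K) ^ n * reciprocityFunction G (n + 2) h k := by
  have hc₀ : (c : K) ≠ 0 := Int.cast_ne_zero.mpr hc.ne'
  have hgcd : ((Int.gcd (c * h) (c * k) : ℕ) : K) = c * (Int.gcd h k : ℕ) := by
    rw [Int.gcd_mul_left, Nat.cast_mul, Nat.cast_natAbs, abs_of_pos hc]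
  simp only [reciprocityFunction, hgcd, hG, Int.cast_mul]
  field_simp
  ring

theorem reciprocityFunction_self (hh : 0 ≤ h) (hG : G h h = (h : K) ^ n * G 1 1) :
    reciprocityFunction G n h h = 0 := by
  rw [reciprocityFunction, Int.gcd_self, Nat.cast_natAbs, abs_of_nonneg hh, hG, mul_comm, sub_self,
    zero_div]

theorem reciprocityFunction_add_add [CharZero K] (hh : 0 < h) (hk : 0 < k)
    (hG : (h : K) * G (h + k) k + k * G h (h + k) = (h + k) * G h k) :
    reciprocityFunction G n (h + k) k + reciprocityFunction G n h (h + k) =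
      reciprocityFunction G n h k := by
  have hh₀ : (h : K) ≠ 0 := Int.cast_ne_zero.mpr hh.ne'
  have hk₀ : (k : K) ≠ 0 := Int.cast_ne_zero.mpr hk.ne'
  have hhk₀ : (h : K) + k ≠ 0 := by exact_mod_cast (add_pos hh hk).ne'
  simp only [reciprocityFunction, Int.gcd_self_add_right, Int.gcd_add_self_left,
    Int.cast_add]
  field_simp
  linear_combination hG

end ReciprocityFunction

theorem eval_smul_of_isHomogeneous {σ R : Type*} [CommSemiring R] {p : MvPolynomial σ R} {n : ℕ}
    (hp : p.IsHomogeneous n) (c : R) (x : σ → R) : eval (c • x) p = c ^ n * eval x p := by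
  rw [eval_eq, eval_eq, Finset.mul_sum]
  refine Finset.sum_congr rfl fun d hd => ?_
  have hdeg : ∑ i ∈ d.support, d i = n := by
    rw [← Finsupp.degree_apply, Finsupp.degree_eq_weight_one]
    exact hp (mem_support_iff.mp hd)
  simp only [Pi.smul_apply, smul_eq_mul, mul_pow, Finset.prod_mul_distrib,
    Finset.prod_pow_eq_pow_sum, hdeg]
  ring

theorem exists_dedekindSymbol_of_laurent_reciprocity_general (w : ℕ) (G : ℤ → ℤ → ℂ)
    (hG : ∀ c h k : ℤ, 0 < c → 0 < h → 0 < k →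
      G (c * h) (c * k) = (c : ℂ) ^ (w + 2) * G h k)
    (hid : ∀ h k : ℤ, 0 < h → 0 < k →
      (h : ℂ) * G (h + k) k + k * G h (h + k) = (h + k) * G h k) :
    ∃ E : ℤ → ℤ → ℂ, IsDedekindSymbol w E ∧
      ∀ h k : ℤ, 0 < h → 0 < k →
        E h k - E k (-h) =
          (G h k - G 1 1 * ((Int.gcd h k : ℕ) : ℂ) ^ (w + 2)) / ((h : ℂ) * (k : ℂ)) := by
  refine exists_isDedekindSymbol_of_threeTerm (f := reciprocityFunction G (w + 2))
    (fun c h k hc hh hk => reciprocityFunction_mul_mul hc (hG c h k hc hh hk))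
    (fun h hh => reciprocityFunction_self hh.le ?_)
    (fun h k hh hk => reciprocityFunction_add_add hh hk (hid h k hh hk))
  simpa only [mul_one] using hG h 1 1 hh one_pos one_pos

/-- Given a homogeneous polynomial `g` of degree `w+2` with
`X·g(X+Y,Y) + Y·g(X,X+Y) = (X+Y)·g(X,Y)`, there is a weighted Dedekind symbol of
weight `w` with reciprocity function `(g(h,k) − g(1,1)·gcd(h,k)^{w+2})/(hk)`. -/
theorem exists_dedekindSymbol_of_laurent_reciprocity (w : ℕ) (hw : Even w) (hw0 : 0 < w)
    (g : MvPolynomial (Fin 2) ℂ) (hg : g.IsHomogeneous (w + 2))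
    (hid : ∀ x y : ℂ,
      x * eval ![x + y, y] g + y * eval ![x, x + y] g = (x + y) * eval ![x, y] g) :
    ∃ E : ℤ → ℤ → ℂ, IsDedekindSymbol w E ∧
      ∀ h k : ℤ, 0 < h → 0 < k →
        E h k - E k (-h) =
          (eval ![(h : ℂ), (k : ℂ)] g
            - eval ![1, 1] g * ((Int.gcd h k : ℕ) : ℂ) ^ (w + 2)) / ((h : ℂ) * (k : ℂ)) := by
  simpa only [Int.cast_one] using exists_dedekindSymbol_of_laurent_reciprocity_general w
    (fun h k => eval ![(h : ℂ), (k : ℂ)] g)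
    (fun c h k _ _ _ => by simpa using eval_smul_of_isHomogeneous hg (c : ℂ) ![(h : ℂ), (k : ℂ)])
    (fun h k _ _ => by simpa using hid h k)
end

section
/- Let w be a positive even integer and let n be an even integer with 0 < n < w. Then E_{w,n} is an odd weighted Dedekind symbol of weight w: E_{w,n}(h,k+h)=E_{w,n}(h,k) and E_{w,n}(ch,ck)=c^w·E_{w,n}(h,k) for all (h,k) ∈ ℤ⁺×ℤ and c ∈ ℤ⁺, and E_{w,n}(h,−k)=−E_{w,n}(h,k) for all (h,k) ∈ ℤ⁺×ℤ. Moreover E_{w,n} satisfies the reciprocity law E_{w,n}(h,k) − E_{w,n}(k,−h) = S_{w,n}(h,k) for all h,k ∈ ℤ⁺. -/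
open scoped Classical

/-- The `m`-th Bernoulli function `B̄_m(x) = B_m(x − ⌊x⌋)` (ℂ-valued, rational argument). -/
noncomputable def Bbar (m : ℕ) (x : ℚ) : ℂ :=
  ((Polynomial.bernoulli m).eval (x - ⌊x⌋) : ℚ)

/-- The `m`-th Bernoulli polynomial evaluated at a complex number. -/
noncomputable def Bpoly (m : ℕ) (x : ℂ) : ℂ :=
  Polynomial.aeval x (Polynomial.bernoulli m)

/-- The `m`-th Bernoulli number `B_m = B_m(0)`. -/
noncomputable def Bnum (m : ℕ) : ℂ := ((bernoulli m : ℚ) : ℂ)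

/-- The finite sum `I_{w,n}(h,k) = (1/2)·∑ sgn(k/h+b/a)·(ak+bh)^{w-n}·(ck+dh)^n`,
over quadruples `(a,b,c,d) ∈ ℤ⁴` with `ad−bc = 1`, `a ≠ 0`, `c ≠ 0`,
`|b+⌊k/h+1/2⌋a| ≤ |a| ≤ h`, `|d+⌊k/h+1/2⌋c| ≤ |c| ≤ h` and `(k/h+b/a)(k/h+d/c) < 0`;
the factor `1/2` accounts for the quotient of `SL(2,ℤ)` by `±1`. -/
noncomputable def Iwn (w n : ℕ) (h k : ℤ) : ℂ :=
  (1 / 2) * ∑ᶠ p : ℤ × ℤ × ℤ × ℤ,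
    if p.1 * p.2.2.2 - p.2.1 * p.2.2.1 = 1 ∧ p.1 ≠ 0 ∧ p.2.2.1 ≠ 0 ∧
        |p.2.1 + ⌊(k : ℚ) / h + 1 / 2⌋ * p.1| ≤ |p.1| ∧ |p.1| ≤ h ∧
        |p.2.2.2 + ⌊(k : ℚ) / h + 1 / 2⌋ * p.2.2.1| ≤ |p.2.2.1| ∧ |p.2.2.1| ≤ h ∧
        ((k : ℚ) / h + p.2.1 / p.1) * ((k : ℚ) / h + p.2.2.2 / p.2.2.1) < 0 then
      (Real.sign ((k : ℝ) / h + (p.2.1 : ℝ) / p.1) : ℂ) *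
        ((p.1 * k + p.2.1 * h : ℤ) : ℂ) ^ (w - n) * ((p.2.2.1 * k + p.2.2.2 * h : ℤ) : ℂ) ^ n
    else 0

/-- `E_{w,n}` for even `n`. -/
noncomputable def EwnEven (w n : ℕ) (h k : ℤ) : ℂ :=
  Iwn w n h k + Bbar (n + 1) ((k : ℚ) / h) / ((n : ℂ) + 1) * (h : ℂ) ^ w
    - Bbar (w - n + 1) ((k : ℚ) / h) / (((w - n : ℕ) : ℂ) + 1) * (h : ℂ) ^ w

/-- `S_{w,n}` for even `n`. -/
noncomputable def SwnEven (w n : ℕ) (h k : ℤ) : ℂ :=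
  Bpoly (n + 1) ((k : ℂ) / h) / ((n : ℂ) + 1) * (h : ℂ) ^ w
    + Bpoly (n + 1) ((h : ℂ) / k) / ((n : ℂ) + 1) * (k : ℂ) ^ w
    - Bpoly (w - n + 1) ((k : ℂ) / h) / (((w - n : ℕ) : ℂ) + 1) * (h : ℂ) ^ w
    - Bpoly (w - n + 1) ((h : ℂ) / k) / (((w - n : ℕ) : ℂ) + 1) * (k : ℂ) ^ w

/-!
Read `k / h` as a cusp. The condition `(k/h + b/a) (k/h + d/c) < 0` says that `γ = (a b; c d)` moves
the geodesic from `∞` to `k / h` across the imaginary axis, and it forces the bounds on the entries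
of `γ` because `h = |a (ck + dh)| + |c (ak + bh)|`. Hence `I_{w,n}(h,k)` is a sum over the edges of
the Farey tessellation crossed by this geodesic, and its behaviour under `k ↦ k + h`, `k ↦ -k` and
`(h, k) ↦ (ch, ck)` comes from translating the tessellation, reflecting it, and homogeneity.

For reciprocity, add the sums for the geodesics from `∞` and from `0` to `k / h`. Together with the
edge from `∞` to `0` these bound an ideal triangle. A Farey edge without an end at `∞` or `0` cannot
cross the edge from `∞` to `0`, so it crosses both or neither of the other two sides, and the two
contributions cancel. The edges ending at `∞` or `0` contribute power sums of arithmetic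
progressions, which are exactly the differences `B_m(x) - B̄_m(x)`.
-/

section OrderedRing

lemma abs_add_round_mul_le {K : Type*} [Field K] [LinearOrder K] [IsStrictOrderedRing K]
    [FloorRing K] {x : K} {a b : ℤ} (h : |a * x + b| < 1) : |b + round x * a| ≤ |a| := by
  have hround : |(a : K)| * |x - round x| ≤ |(a : K)| * (1 / 2) :=
    mul_le_mul_of_nonneg_left (abs_sub_round x) (abs_nonneg _)
  have hlt : |(b + round x * a : K)| < |(a : K)| + 1 := calc
    |(b + round x * a : K)| = |(a * x + b) - a * (x - round x)| := by congr 1; ring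
    _ ≤ |a * x + b| + |(a : K)| * |x - round x| := by rw [← abs_mul]; exact abs_sub _ _
    _ < |(a : K)| + 1 := by linarith [abs_nonneg (a : K)]
  exact Int.lt_add_one_iff.mp (by exact_mod_cast hlt)

lemma abs_add_abs_of_mul_neg {K : Type*} [CommRing K] [LinearOrder K] [IsStrictOrderedRing K]
    {p q : K} (h : p * q < 0) : |p| + |q| = |p - q| := by
  rcases mul_neg_iff.mp h with ⟨hp, hq⟩ | ⟨hp, hq⟩
  · rw [abs_of_pos hp, abs_of_neg hq, abs_of_pos (by linarith)]; ring
  · rw [abs_of_neg hp, abs_of_pos hq, abs_of_neg (by linarith)]; ring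

lemma real_sign_mul_of_pos (r : ℝ) {s : ℝ} (hs : 0 < s) : Real.sign (r * s) = Real.sign r := by
  rcases lt_trichotomy r 0 with hr | rfl | hr
  · rw [Real.sign_of_neg hr, Real.sign_of_neg (mul_neg_of_neg_of_pos hr hs)]
  · rw [zero_mul]
  · rw [Real.sign_of_pos hr, Real.sign_of_pos (mul_pos hr hs)]

end OrderedRing

section Bernoulli

lemma Bbar_add_one (m : ℕ) (x : ℚ) : Bbar m (x + 1) = Bbar m x := by
  simp [Bbar]

lemma Bbar_neg {m : ℕ} (hm : Odd m) (hm1 : 1 < m) (x : ℚ) : Bbar m (-x) = -Bbar m x := by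
  simp only [Bbar, ← Int.fract.eq_1, ← Rat.cast_neg]
  congr 1
  by_cases hx : Int.fract x = 0
  · rw [hx, Int.fract_neg_eq_zero.mpr hx, Polynomial.bernoulli_eval_zero,
      bernoulli_eq_zero_of_odd hm hm1, neg_zero]
  · rw [Int.fract_neg hx, Polynomial.bernoulli_eval_one_sub, hm.neg_one_pow, neg_one_mul]

lemma Bpoly_ratCast (m : ℕ) (x : ℚ) :
    Bpoly m x = ((Polynomial.bernoulli m).eval x : ℚ) := by
  simpa [Bpoly] using Polynomial.aeval_algebraMap_apply ℂ x (Polynomial.bernoulli m)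

lemma bernoulli_succ_eval_sub_eval_sub_natCast (n : ℕ) (x : ℚ) (N : ℕ) :
    (Polynomial.bernoulli (n + 1)).eval x - (Polynomial.bernoulli (n + 1)).eval (x - N) =
      (n + 1) * ∑ c ∈ Finset.Ico (-N : ℤ) 0, (x + c) ^ n := by
  induction N with
  | zero => simp
  | succ N ih =>
    have hIco : Finset.Ico (-(N + 1 : ℕ) : ℤ) 0 =
        insert (-(N + 1 : ℕ) : ℤ) (Finset.Ico (-N : ℤ) 0) := by ext; simp; omega
    have hstep := Polynomial.bernoulli_eval_one_add (n + 1) (x - (N + 1))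
    rw [show 1 + (x - (N + 1)) = x - (N : ℚ) by ring, Nat.add_sub_cancel] at hstep
    rw [hIco, Finset.sum_insert (by simp), mul_add, ← ih]
    push_cast at hstep ⊢
    linear_combination hstep

lemma Bpoly_succ_ratCast (n : ℕ) {x : ℚ} (hx : 0 ≤ x) :
    Bpoly (n + 1) x = Bbar (n + 1) x +
      (n + 1) * ∑ c ∈ Finset.Ico (-⌊x⌋) 0, ((x : ℂ) + c) ^ n := by
  have h := bernoulli_succ_eval_sub_eval_sub_natCast n x ⌊x⌋.toNat
  rw [← Int.cast_natCast, Int.toNat_of_nonneg (Int.floor_nonneg.mpr hx)] at h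
  rw [Bpoly_ratCast, Bbar, ← sub_eq_iff_eq_add', ← Rat.cast_sub, h]
  push_cast
  rfl

/-- For `0 < h` and `0 ≤ k`, the sum of the `n`-th powers of the arithmetic progression `k - h`,
`k - 2 * h`, …, `k % h`. -/
noncomputable def progressionSum (n : ℕ) (h k : ℤ) : ℂ :=
  ∑ c ∈ Finset.Ico (-(k / h)) 0, ((k + c * h : ℤ) : ℂ) ^ n

lemma Bpoly_succ_div_mul_pow (m n : ℕ) {h k : ℤ} (hh : 0 < h) (hk : 0 ≤ k) :
    Bpoly (n + 1) ((k : ℂ) / h) / (n + 1) * (h : ℂ) ^ (m + n) =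
      Bbar (n + 1) ((k : ℚ) / h) / (n + 1) * (h : ℂ) ^ (m + n) +
        (h : ℂ) ^ m * progressionSum n h k := by
  have hn1 : (n : ℂ) + 1 ≠ 0 := n.cast_add_one_ne_zero
  have hh0 : (h : ℂ) ≠ 0 := mod_cast hh.ne'
  have hx : (0 : ℚ) ≤ (k : ℚ) / h := by positivity
  have hfloor : ⌊(k : ℚ) / h⌋ = k / h := by
    rw [Int.floor_div_cast_of_nonneg hh.le, Int.floor_intCast]
  have hB := Bpoly_succ_ratCast n hx
  rw [hfloor] at hB
  push_cast at hB
  have hsum : progressionSum n h k =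
      (∑ c ∈ Finset.Ico (-(k / h)) 0, ((k : ℂ) / h + c) ^ n) * (h : ℂ) ^ n := by
    rw [progressionSum, Finset.sum_mul]
    refine Finset.sum_congr rfl fun c _ ↦ ?_
    rw [← mul_pow]
    congr 1
    push_cast
    field_simp
  rw [hB, hsum]
  field_simp
  ring

end Bernoulli

section Crossing

open Matrix
open scoped MatrixGroups

/-- The determinant of the matrix with columns `y` and `x`, an invariant of pairs of cusp vectors
under `SL(2, ℤ)`. -/
def wedge (y x : Fin 2 → ℤ) : ℤ := y 0 * x 1 - y 1 * x 0

/-- The weight of the geodesic from the cusp `y 0 / y 1` to the cusp `x 0 / x 1` at the imaginary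
axis: zero unless the two cusps have opposite signs, that is, unless the geodesic crosses the axis.
Cusps are encoded by integer vectors, and the weight changes sign with `y`. -/
noncomputable def crossingTerm (m n : ℕ) (y x : Fin 2 → ℤ) : ℂ :=
  if y 0 * x 0 * (y 1 * x 1) < 0 then
    ((y 0 * x 0).sign : ℂ) * (x 0 : ℂ) ^ m * (x 1 : ℂ) ^ n
  else 0

/-- The total weight of the geodesic from the cusp `y` to the cusp `x` at all edges of the Farey
tessellation, the translates of the imaginary axis under `γ⁻¹` for `γ` in `SL(2, ℤ)`. Since `γ` and
`-γ` give the same edge, this is twice the sum `I_{m+n,n}(h,k)` when `y = ∞` and `x = k / h`. -/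
noncomputable def crossingSum (m n : ℕ) (y x : Fin 2 → ℤ) : ℂ :=
  ∑ᶠ γ : SL(2, ℤ), crossingTerm m n (γ *ᵥ y) (γ *ᵥ x)

variable (m n : ℕ) {y z x : Fin 2 → ℤ}

lemma wedge_mulVec (A : Matrix (Fin 2) (Fin 2) ℤ) (y x : Fin 2 → ℤ) :
    wedge (A *ᵥ y) (A *ᵥ x) = A.det * wedge y x := by
  simp only [wedge, mulVec, dotProduct, Fin.sum_univ_two, det_fin_two]
  ring

lemma abs_lt_abs_wedge_of_crossing (h : y 0 * x 0 * (y 1 * x 1) < 0) (i : Fin 2) :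
    |y i| < |wedge y x| ∧ |x i| < |wedge y x| := by
  have hy0 : y 0 ≠ 0 := by rintro hy; simp [hy] at h
  have hy1 : y 1 ≠ 0 := by rintro hy; simp [hy] at h
  have hx0 : x 0 ≠ 0 := by rintro hx; simp [hx] at h
  have hx1 : x 1 ≠ 0 := by rintro hx; simp [hx] at h
  have hsum : |y 0| * |x 1| + |y 1| * |x 0| = |wedge y x| := by
    simp only [← abs_mul, wedge]
    exact abs_add_abs_of_mul_neg (by linarith)
  have := Int.one_le_abs hy0
  have := Int.one_le_abs hy1
  have := Int.one_le_abs hx0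
  have := Int.one_le_abs hx1
  fin_cases i <;> constructor <;> simp only [Fin.zero_eta, Fin.mk_one] <;> nlinarith

lemma injective_mulVec_pair (h : wedge y x ≠ 0) :
    Function.Injective fun γ : SL(2, ℤ) ↦ ((γ : Matrix (Fin 2) (Fin 2) ℤ) *ᵥ y, γ.1 *ᵥ x) := by
  intro γ δ hγδ
  obtain ⟨hy, hx⟩ := Prod.mk.inj hγδ
  ext i j
  have hyi := congrFun hy i
  have hxi := congrFun hx i
  simp only [mulVec, dotProduct, Fin.sum_univ_two] at hyi hxi
  apply mul_right_cancel₀ h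
  unfold wedge
  fin_cases j <;> simp only [Fin.zero_eta, Fin.mk_one]
  · linear_combination x 1 * hyi - y 1 * hxi
  · linear_combination y 0 * hxi - x 0 * hyi

lemma hasFiniteSupport_crossingTerm (h : wedge y x ≠ 0) :
    Function.HasFiniteSupport fun γ : SL(2, ℤ) ↦ crossingTerm m n (γ *ᵥ y) (γ *ᵥ x) := by
  let box : Set (Fin 2 → ℤ) := Set.Icc (fun _ ↦ -|wedge y x|) (fun _ ↦ |wedge y x|)
  have hbox : box.Finite := Set.finite_Icc _ _
  refine ((hbox.prod hbox).preimage (injective_mulVec_pair h).injOn).subset fun γ hγ ↦ ?_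
  have hcross := abs_lt_abs_wedge_of_crossing (not_not.mp fun h ↦ hγ (if_neg h))
  rw [wedge_mulVec, γ.det_coe, one_mul] at hcross
  exact ⟨⟨fun i ↦ (abs_le.mp (hcross i).1.le).1, fun i ↦ (abs_le.mp (hcross i).1.le).2⟩,
    ⟨fun i ↦ (abs_le.mp (hcross i).2.le).1, fun i ↦ (abs_le.mp (hcross i).2.le).2⟩⟩

variable {m n}

lemma crossingTerm_neg_left (y x : Fin 2 → ℤ) :
    crossingTerm m n (-y) x = -crossingTerm m n y x := by
  simp only [crossingTerm, Pi.neg_apply, neg_mul, mul_neg, neg_neg, Int.sign_neg, Int.cast_neg]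
  split_ifs <;> simp

lemma crossingTerm_neg_right (hmn : Even (m + n)) (y x : Fin 2 → ℤ) :
    crossingTerm m n y (-x) = -crossingTerm m n y x := by
  have hpow : (-1 : ℂ) ^ m * (-1) ^ n = 1 := by rw [← pow_add, hmn.neg_one_pow]
  simp only [crossingTerm, Pi.neg_apply, mul_neg, neg_mul, neg_neg, Int.sign_neg,
    Int.cast_neg, neg_pow (x 0 : ℂ), neg_pow (x 1 : ℂ)]
  split_ifs
  · linear_combination -((y 0 * x 0).sign * (x 0 : ℂ) ^ m * (x 1 : ℂ) ^ n) * hpow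
  · simp

lemma crossingTerm_congr_sign (x : Fin 2 → ℤ) (h : ∀ i, (y i).sign = (z i).sign) :
    crossingTerm m n y x = crossingTerm m n z x := by
  simp only [crossingTerm, ← Int.sign_eq_neg_one_iff_neg, Int.sign_mul, h]

lemma crossingTerm_smul_right {c : ℤ} (hc : 0 < c) (y x : Fin 2 → ℤ) :
    crossingTerm m n y (c • x) = (c : ℂ) ^ (m + n) * crossingTerm m n y x := by
  simp only [crossingTerm, ← Int.sign_eq_neg_one_iff_neg, Int.sign_mul, Pi.smul_apply, smul_eq_mul,
    Int.sign_eq_one_of_pos hc, one_mul, mul_ite, mul_zero, Int.cast_mul]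
  congr 1
  ring

lemma crossingTerm_reflect (hn : Even n) (y x : Fin 2 → ℤ) :
    crossingTerm m n (!![1, 0; 0, -1] *ᵥ y) (!![1, 0; 0, -1] *ᵥ x) = crossingTerm m n y x := by
  simp [crossingTerm, mulVec_eq_sum, hn.neg_pow]

lemma crossingTerm_rotate (hn : Even n) (y x : Fin 2 → ℤ) :
    crossingTerm n m (ModularGroup.S *ᵥ y) (ModularGroup.S *ᵥ x) = -crossingTerm m n y x := by
  by_cases h : y 0 * x 0 * (y 1 * x 1) < 0
  · have hsign : (y 1 * x 1).sign = -(y 0 * x 0).sign := by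
      rcases mul_neg_iff.mp h with ⟨h0, h1⟩ | ⟨h0, h1⟩ <;>
        simp [Int.sign_eq_one_of_pos, Int.sign_eq_neg_one_of_neg, h0, h1]
    simp [crossingTerm, mulVec_eq_sum, ModularGroup.S, hn.neg_pow, h, mul_comm (y 1 * x 1), hsign]
    ring
  · simp [crossingTerm, mulVec_eq_sum, ModularGroup.S, h, mul_comm (y 1 * x 1)]

end Crossing

section Symmetry

open Matrix
open scoped MatrixGroups

lemma finsum_specialLinearGroup_mul_right {ι R M : Type*} [Fintype ι] [DecidableEq ι] [CommRing R]
    [AddCommMonoid M] {f : Matrix ι ι R → M} {e g : Matrix ι ι R} (hdet : e.det * g.det = 1)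
    (hf : ∀ A, f (e * A) = f A) :
    ∑ᶠ γ : SpecialLinearGroup ι R, f (γ * g) = ∑ᶠ γ : SpecialLinearGroup ι R, f γ := by
  have he : IsUnit e.det := .of_mul_eq_one _ hdet
  have hg : IsUnit g.det := .of_mul_eq_one_right _ hdet
  have hdet' : e⁻¹.det * g⁻¹.det = 1 := by
    rw [det_nonsing_inv, det_nonsing_inv, ← Ring.mul_inverse_rev, mul_comm, hdet, Ring.inverse_one]
  refine finsum_eq_of_bijective (fun γ ↦ ⟨e * γ * g, by simp [hdet]⟩)
    (Function.bijective_iff_has_inverse.mpr ⟨fun γ ↦ ⟨e⁻¹ * γ * g⁻¹, by simpa using hdet'⟩, ?_, ?_⟩)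
    fun γ ↦ by rw [← hf, ← mul_assoc]
  · intro γ
    ext1
    simp [mul_assoc, he, hg]
  · intro γ
    ext1
    simp [mul_assoc, he, hg]

variable {m n : ℕ}

lemma crossingSum_mulVec {e g : Matrix (Fin 2) (Fin 2) ℤ} (hdet : e.det * g.det = 1)
    (he : ∀ y x, crossingTerm m n (e *ᵥ y) (e *ᵥ x) = crossingTerm m n y x) (y x : Fin 2 → ℤ) :
    crossingSum m n (g *ᵥ y) (g *ᵥ x) = crossingSum m n y x := by
  simpa only [crossingSum, mulVec_mulVec] using
    finsum_specialLinearGroup_mul_right (f := fun A ↦ crossingTerm m n (A *ᵥ y) (A *ᵥ x)) hdet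
      fun A ↦ by simp only [← mulVec_mulVec, he]

lemma crossingSum_translate (h k : ℤ) :
    crossingSum m n ![1, 0] ![k + h, h] = crossingSum m n ![1, 0] ![k, h] := by
  simpa [-mulVec_cons] using
    crossingSum_mulVec (m := m) (n := n) (e := 1) (g := !![1, 1; 0, 1]) (by simp) (by simp)
      ![1, 0] ![k, h]

lemma crossingSum_smul_right {c : ℤ} (hc : 0 < c) (y x : Fin 2 → ℤ) :
    crossingSum m n y (c • x) = (c : ℂ) ^ (m + n) * crossingSum m n y x := by
  simp only [crossingSum, mulVec_smul, crossingTerm_smul_right hc, mul_finsum]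

lemma crossingSum_neg_left (y x : Fin 2 → ℤ) :
    crossingSum m n (-y) x = -crossingSum m n y x := by
  simp only [crossingSum, mulVec_neg, crossingTerm_neg_left, finsum_neg_distrib]

lemma crossingSum_reflect (hn : Even n) (h k : ℤ) :
    crossingSum m n ![1, 0] ![-k, h] = -crossingSum m n ![1, 0] ![k, h] := by
  rw [← crossingSum_neg_left]
  simpa [-mulVec_cons] using
    crossingSum_mulVec (m := m) (e := !![1, 0; 0, -1]) (g := !![-1, 0; 0, 1])
      (by simp) (crossingTerm_reflect hn) ![-1, 0] ![k, h]

lemma crossingSum_swap (hn : Even n) (h k : ℤ) :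
    crossingSum m n ![0, 1] ![h, k] = crossingSum m n ![1, 0] ![k, h] := by
  simpa [-mulVec_cons] using
    crossingSum_mulVec (m := m) (e := !![1, 0; 0, -1]) (g := !![0, 1; 1, 0])
      (by simp) (crossingTerm_reflect hn) ![1, 0] ![k, h]

end Symmetry

section QuadrupleSum

open Matrix
open scoped MatrixGroups

lemma finsum_comp_of_support_subset_range {α β M : Type*} [AddCommMonoid M] {f : β → M} {g : α → β}
    (hg : g.Injective) (hf : f.support ⊆ Set.range g) : ∑ᶠ a, f (g a) = ∑ᶠ b, f b := by
  rw [← finsum_mem_range hg, ← finsum_mem_univ f]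
  exact finsum_mem_inter_support_eq' f _ _ fun b hb ↦ by simpa using hf hb

lemma finsum_specialLinearGroup_fin_two {R M : Type*} [CommRing R] [AddCommMonoid M]
    {f : R × R × R × R → M} (hf : ∀ a b c d, a * d - b * c ≠ 1 → f (a, b, c, d) = 0) :
    ∑ᶠ p, f p = ∑ᶠ γ : SL(2, R), f (γ 0 0, γ 0 1, γ 1 0, γ 1 1) := by
  refine (finsum_comp_of_support_subset_range (fun γ δ h ↦ ?_) ?_).symm
  · simp only [Prod.mk.injEq] at h
    ext i j
    fin_cases i <;> fin_cases j <;> simp [h]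
  · rintro ⟨a, b, c, d⟩ hp
    have hdet : a * d - b * c = 1 := not_not.mp (mt (hf a b c d) hp)
    exact ⟨⟨!![a, b; c, d], by rwa [det_fin_two_of]⟩, by simp⟩

lemma div_add_div_eq_mul_inv {K : Type*} [Field K] {h a : K} (hh : h ≠ 0) (ha : a ≠ 0) (k b : K) :
    k / h + b / a = a * (a * k + b * h) * (h * a ^ 2)⁻¹ := by
  field_simp

lemma div_add_div_mul_div_add_div_neg_iff {h k a b c d : ℤ} (hh : 0 < h) (ha : a ≠ 0)
    (hc : c ≠ 0) :
    ((k : ℚ) / h + b / a) * ((k : ℚ) / h + d / c) < 0 ↔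
      a * (a * k + b * h) * (c * (c * k + d * h)) < 0 := by
  have hhQ : (0 : ℚ) < h := mod_cast hh
  have haQ : (a : ℚ) ≠ 0 := mod_cast ha
  have hcQ : (c : ℚ) ≠ 0 := mod_cast hc
  rw [div_add_div_eq_mul_inv hhQ.ne' haQ, div_add_div_eq_mul_inv hhQ.ne' hcQ, mul_mul_mul_comm,
    mul_comm, ← smul_eq_mul, smul_neg_iff_of_pos_left (by positivity)]
  norm_cast

lemma abs_add_floor_mul_le {h k a b : ℤ} (hh : 0 < h) (hu : |a * k + b * h| < h) :
    |b + ⌊(k : ℚ) / h + 1 / 2⌋ * a| ≤ |a| := by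
  have hhQ : (0 : ℚ) < h := mod_cast hh
  rw [← round_eq]
  apply abs_add_round_mul_le
  rw [mul_div_assoc', div_add' _ _ _ hhQ.ne', abs_div, abs_of_pos hhQ, div_lt_one hhQ]
  exact_mod_cast hu

lemma Iwn_condition_iff {h k a b c d : ℤ} (hh : 0 < h) (hdet : a * d - b * c = 1) :
    (a ≠ 0 ∧ c ≠ 0 ∧
      |b + ⌊(k : ℚ) / h + 1 / 2⌋ * a| ≤ |a| ∧ |a| ≤ h ∧
      |d + ⌊(k : ℚ) / h + 1 / 2⌋ * c| ≤ |c| ∧ |c| ≤ h ∧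
      ((k : ℚ) / h + b / a) * ((k : ℚ) / h + d / c) < 0) ↔
    a * (a * k + b * h) * (c * (c * k + d * h)) < 0 := by
  refine ⟨fun ⟨ha, hc, _, _, _, _, hneg⟩ ↦
    (div_add_div_mul_div_add_div_neg_iff hh ha hc).mp hneg, fun hneg ↦ ?_⟩
  have ha : a ≠ 0 := by rintro rfl; simp at hneg
  have hc : c ≠ 0 := by rintro rfl; simp at hneg
  have hwedge : wedge ![a, c] ![a * k + b * h, c * k + d * h] = h := by
    simp only [wedge, cons_val_zero, cons_val_one]
    linear_combination h * hdet
  have hbound := abs_lt_abs_wedge_of_crossing (y := ![a, c]) (x := ![a * k + b * h, c * k + d * h])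
    (by simpa using hneg)
  rw [hwedge, abs_of_pos hh, Fin.forall_fin_two] at hbound
  simp only [cons_val_zero, cons_val_one] at hbound
  obtain ⟨⟨hah, huh⟩, hch, hvh⟩ := hbound
  exact ⟨ha, hc, abs_add_floor_mul_le hh huh, hah.le, abs_add_floor_mul_le hh hvh, hch.le,
    (div_add_div_mul_div_add_div_neg_iff hh ha hc).mpr hneg⟩

lemma sign_div_add_div {h k a b : ℤ} (hh : 0 < h) (ha : a ≠ 0) :
    Real.sign ((k : ℝ) / h + (b : ℝ) / a) = (a * (a * k + b * h)).sign := by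
  have hhR : (0 : ℝ) < h := mod_cast hh
  have haR : (a : ℝ) ≠ 0 := mod_cast ha
  rw [div_add_div_eq_mul_inv hhR.ne' haR, real_sign_mul_of_pos _ (by positivity),
    ← Real.sign_intCast]
  push_cast
  rfl

lemma Iwn_eq_crossingSum (w n : ℕ) {h : ℤ} (hh : 0 < h) (k : ℤ) :
    Iwn w n h k = 1 / 2 * crossingSum (w - n) n ![1, 0] ![k, h] := by
  rw [Iwn, finsum_specialLinearGroup_fin_two fun a b c d h ↦ if_neg (h ·.1), crossingSum]
  congr 1
  refine finsum_congr fun γ ↦ ?_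
  have hdet := γ.det_coe
  rw [det_fin_two] at hdet
  simp only [hdet, true_and, Iwn_condition_iff hh hdet, crossingTerm, mulVec, dotProduct,
    Fin.sum_univ_two, cons_val_zero, cons_val_one, mul_one, mul_zero, add_zero]
  refine ite_congr rfl (fun hneg ↦ ?_) fun _ ↦ rfl
  have ha : γ 0 0 ≠ 0 := by intro ha; simp [ha] at hneg
  rw [sign_div_add_div hh ha, Complex.ofReal_intCast]

end QuadrupleSum

section Triangle

open Matrix
open scoped MatrixGroups

/-- The weight of the geodesic from `y` to `x` at the imaginary axis, counted only if the cusp `z`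
is the end `∞` of the axis. -/
noncomputable def edgeTerm (m n : ℕ) (y z x : Fin 2 → ℤ) : ℂ :=
  if z 1 = 0 then crossingTerm m n y x else 0

/-- The part of `crossingSum m n y x` coming from the Farey edges that have the cusp `z` as an end,
oriented so that `z` is sent to `∞`. -/
noncomputable def edgeSum (m n : ℕ) (y z x : Fin 2 → ℤ) : ℂ :=
  ∑ᶠ γ : SL(2, ℤ), edgeTerm m n (γ *ᵥ y) (γ *ᵥ z) (γ *ᵥ x)

variable {m n : ℕ} {y z : Fin 2 → ℤ} {k h : ℤ}

lemma mul_mul_mul_pos_of_wedge_eq_one (hyz : wedge y z = 1) (hy : ∀ i, y i ≠ 0)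
    (hz : ∀ i, z i ≠ 0) : 0 < y 0 * z 0 * (y 1 * z 1) := by
  have hne : y 1 * z 0 ≠ 0 := mul_ne_zero (hy 1) (hz 0)
  have hne' : y 0 * z 1 ≠ 0 := mul_ne_zero (hy 0) (hz 1)
  have hsucc : y 0 * z 1 = y 1 * z 0 + 1 := by
    rw [wedge] at hyz
    linear_combination hyz
  have hpos : 0 < (y 1 * z 0) * (y 0 * z 1) := by
    rw [hsucc] at hne' ⊢
    rcases lt_or_gt_of_ne hne with hlt | hgt
    · exact mul_pos_of_neg_of_neg hlt (by lia)
    · positivity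
  linarith

lemma crossingTerm_add_crossingTerm_eq_zero (hyz : wedge y z = 1) (hk : 0 < k) (hh : 0 < h)
    (hy : ∀ i, y i ≠ 0) (hz : ∀ i, z i ≠ 0) :
    crossingTerm m n y (k • y + h • z) + crossingTerm m n z (k • y + h • z) = 0 := by
  rcases mul_pos_iff.mp (mul_mul_mul_pos_of_wedge_eq_one hyz hy hz) with hpos | hneg
  · have hyz' (i : Fin 2) : 0 < y i * z i := by fin_cases i <;> simp [hpos]
    have hy' (i : Fin 2) : 0 < y i * (k • y + h • z) i := calc
      0 < k * y i ^ 2 + h * (y i * z i) := by have := hyz' i; positivity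
      _ = _ := by simp; ring
    have hz' (i : Fin 2) : 0 < z i * (k • y + h • z) i := calc
      0 < k * (y i * z i) + h * z i ^ 2 := by have := hyz' i; positivity
      _ = _ := by simp; ring
    rw [crossingTerm, crossingTerm, if_neg (mul_pos (hy' 0) (hy' 1)).not_gt,
      if_neg (mul_pos (hz' 0) (hz' 1)).not_gt, add_zero]
  · have hsign (i : Fin 2) : (z i).sign = ((-y) i).sign := by
      have hyz : y i * z i < 0 := by fin_cases i <;> simp [hneg]
      rcases mul_neg_iff.mp hyz with ⟨hy, hz⟩ | ⟨hy, hz⟩ <;>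
        simp [Int.sign_eq_one_of_pos, Int.sign_eq_neg_one_of_neg, hy, hz]
    rw [crossingTerm_congr_sign _ hsign, crossingTerm_neg_left, add_neg_cancel]

lemma crossingTerm_add_crossingTerm (hn : Even n) (hyz : wedge y z = 1) (hk : 0 < k) (hh : 0 < h) :
    crossingTerm m n y (k • y + h • z) + crossingTerm m n z (k • y + h • z) =
      edgeTerm m n y z (k • y + h • z) -
        edgeTerm n m (ModularGroup.S *ᵥ y) (ModularGroup.S *ᵥ z)
          (ModularGroup.S *ᵥ (k • y + h • z)) +
      (edgeTerm m n z y (k • y + h • z) -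
        edgeTerm n m (ModularGroup.S *ᵥ z) (ModularGroup.S *ᵥ y)
          (ModularGroup.S *ᵥ (k • y + h • z))) := by
  set x := k • y + h • z
  have hS (v : Fin 2 → ℤ) : ((ModularGroup.S : Matrix (Fin 2) (Fin 2) ℤ) *ᵥ v) 1 = v 0 := by
    simp [ModularGroup.S, mulVec, dotProduct]
  have hzero {v : Fin 2 → ℤ} (hv : v 0 = 0 ∨ v 1 = 0) : crossingTerm m n v x = 0 := by
    rcases hv with hv | hv <;> simp [crossingTerm, hv]
  simp only [edgeTerm, hS, crossingTerm_rotate hn]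
  by_cases hne : (∀ i, y i ≠ 0) ∧ ∀ i, z i ≠ 0
  · simpa [hne, x] using crossingTerm_add_crossingTerm_eq_zero hyz hk hh hne.1 hne.2
  · simp only [Fin.forall_fin_two] at hne
    by_cases hy0 : y 0 = 0 <;> by_cases hy1 : y 1 = 0 <;>
    by_cases hz0 : z 0 = 0 <;> by_cases hz1 : z 1 = 0 <;> simp_all [wedge]

lemma hasFiniteSupport_edgeTerm (m n : ℕ) {y x : Fin 2 → ℤ} (z : Fin 2 → ℤ) (h : wedge y x ≠ 0) :
    Function.HasFiniteSupport fun γ : SL(2, ℤ) ↦ edgeTerm m n (γ *ᵥ y) (γ *ᵥ z) (γ *ᵥ x) := by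
  refine (hasFiniteSupport_crossingTerm m n h).subset fun γ hγ hzero ↦ hγ ?_
  simp only [edgeTerm, hzero, ite_self]

lemma finsum_edgeTerm_mul_left (δ : SL(2, ℤ)) (y z x : Fin 2 → ℤ) :
    ∑ᶠ γ : SL(2, ℤ), edgeTerm m n (δ *ᵥ (γ.1 *ᵥ y)) (δ *ᵥ (γ.1 *ᵥ z)) (δ *ᵥ (γ.1 *ᵥ x)) =
      edgeSum m n y z x := by
  simp only [mulVec_mulVec]
  exact finsum_comp_equiv (Equiv.mulLeft δ)
    (f := fun γ : SL(2, ℤ) ↦ edgeTerm m n (γ *ᵥ y) (γ *ᵥ z) (γ *ᵥ x))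

lemma hasFiniteSupport_edgeTerm_mul_left (δ : SL(2, ℤ)) {y x : Fin 2 → ℤ} (z : Fin 2 → ℤ)
    (h : wedge y x ≠ 0) : Function.HasFiniteSupport fun γ : SL(2, ℤ) ↦
      edgeTerm m n (δ *ᵥ (γ.1 *ᵥ y)) (δ *ᵥ (γ.1 *ᵥ z)) (δ *ᵥ (γ.1 *ᵥ x)) := by
  simp only [mulVec_mulVec]
  exact (hasFiniteSupport_edgeTerm m n z h).fun_comp_of_injective (mul_right_injective δ)

lemma wedge_left_smul_add_smul (y z : Fin 2 → ℤ) (k h : ℤ) :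
    wedge y (k • y + h • z) = h * wedge y z := by
  simp only [wedge, Pi.add_apply, Pi.smul_apply, smul_eq_mul]
  ring

lemma wedge_right_smul_add_smul (y z : Fin 2 → ℤ) (k h : ℤ) :
    wedge z (k • y + h • z) = -k * wedge y z := by
  simp only [wedge, Pi.add_apply, Pi.smul_apply, smul_eq_mul]
  ring

lemma crossingSum_add_crossingSum (hn : Even n) (hyz : wedge y z = 1) (hk : 0 < k) (hh : 0 < h) :
    crossingSum m n y (k • y + h • z) + crossingSum m n z (k • y + h • z) =
      edgeSum m n y z (k • y + h • z) - edgeSum n m y z (k • y + h • z) +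
        (edgeSum m n z y (k • y + h • z) - edgeSum n m z y (k • y + h • z)) := by
  have hpointwise (γ : SL(2, ℤ)) := crossingTerm_add_crossingTerm (m := m) hn
    (y := γ *ᵥ y) (z := γ *ᵥ z) (by rw [wedge_mulVec, γ.det_coe, one_mul, hyz]) hk hh
  simp only [← mulVec_smul, ← mulVec_add] at hpointwise
  have hyx : wedge y (k • y + h • z) ≠ 0 := by
    rw [wedge_left_smul_add_smul, hyz, mul_one]
    exact hh.ne'
  have hzx : wedge z (k • y + h • z) ≠ 0 := by
    rw [wedge_right_smul_add_smul, hyz, mul_one]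
    exact neg_ne_zero.mpr hk.ne'
  generalize k • y + h • z = x at *
  have hfin_y := hasFiniteSupport_edgeTerm m n z hyx
  have hfin_z := hasFiniteSupport_edgeTerm m n y hzx
  have hfin_Sy := hasFiniteSupport_edgeTerm_mul_left (m := n) (n := m) ModularGroup.S z hyx
  have hfin_Sz := hasFiniteSupport_edgeTerm_mul_left (m := n) (n := m) ModularGroup.S y hzx
  rw [crossingSum, crossingSum, ← finsum_add_distrib (hasFiniteSupport_crossingTerm m n hyx)
    (hasFiniteSupport_crossingTerm m n hzx), finsum_congr hpointwise,
    finsum_add_distrib (hfin_y.fun_sub hfin_Sy) (hfin_z.fun_sub hfin_Sz),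
    finsum_sub_distrib hfin_y hfin_Sy, finsum_sub_distrib hfin_z hfin_Sz,
    finsum_edgeTerm_mul_left, finsum_edgeTerm_mul_left]
  rfl

end Triangle

section EdgeSum

open Matrix
open scoped MatrixGroups

lemma eq_T_zpow_or_neg_of_c_eq_zero {γ : SL(2, ℤ)} (hc : γ 1 0 = 0) :
    ∃ c : ℤ, γ = ModularGroup.T ^ c ∨ γ = -ModularGroup.T ^ c := by
  have hdet := γ.det_coe
  rw [det_fin_two, hc, mul_zero, sub_zero] at hdet
  rcases Int.eq_one_or_neg_one_of_mul_eq_one' hdet with ⟨ha, hd⟩ | ⟨ha, hd⟩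
  · refine ⟨γ 0 1, .inl ?_⟩
    ext i j
    fin_cases i <;> fin_cases j <;> simp [ha, hc, hd, ModularGroup.coe_T_zpow]
  · refine ⟨-γ 0 1, .inr ?_⟩
    ext i j
    fin_cases i <;> fin_cases j <;> simp [ha, hc, hd, ModularGroup.coe_T_zpow]

lemma finsum_eq_two_mul_finsum_T_zpow {R : Type*} [NonAssocSemiring R] {f : SL(2, ℤ) → R}
    (hfin : f.HasFiniteSupport) (hneg : ∀ γ, f (-γ) = f γ) (hf : ∀ γ, γ 1 0 ≠ 0 → f γ = 0) :
    ∑ᶠ γ, f γ = 2 * ∑ᶠ c : ℤ, f (ModularGroup.T ^ c) := by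
  have hinj : Function.Injective fun c : ℤ ↦ ModularGroup.T ^ c := fun c d hcd ↦ by
    simpa [ModularGroup.coe_T_zpow] using congrArg (fun γ : SL(2, ℤ) ↦ γ 0 1) hcd
  have hinj' : Function.Injective fun c : ℤ ↦ -ModularGroup.T ^ c := neg_injective.comp hinj
  have hdisj : Disjoint (Set.range fun c : ℤ ↦ ModularGroup.T ^ c)
      (Set.range fun c : ℤ ↦ -ModularGroup.T ^ c) := by
    refine Set.disjoint_range_iff.mpr fun c d hcd ↦ ?_
    have := congrArg (fun γ : SL(2, ℤ) ↦ γ 0 0) hcd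
    simp [ModularGroup.coe_T_zpow] at this
  rw [← finsum_mem_univ, finsum_mem_inter_support_eq' f Set.univ
    (Set.range (fun c : ℤ ↦ ModularGroup.T ^ c) ∪ Set.range fun c : ℤ ↦ -ModularGroup.T ^ c),
    finsum_mem_union'' (hdisj.mono Set.inter_subset_left Set.inter_subset_left)
      (hfin.subset Set.inter_subset_right) (hfin.subset Set.inter_subset_right),
    finsum_mem_range hinj, finsum_mem_range hinj', two_mul]
  · simp only [hneg]
  · intro γ hγ
    obtain ⟨c, hc | hc⟩ := eq_T_zpow_or_neg_of_c_eq_zero (not_not.mp (mt (hf γ) hγ)) <;>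
      simp [hc]

variable {m n : ℕ}

lemma edgeTerm_neg (hmn : Even (m + n)) (y z x : Fin 2 → ℤ) :
    edgeTerm m n (-y) (-z) (-x) = edgeTerm m n y z x := by
  simp only [edgeTerm, crossingTerm_neg_left, crossingTerm_neg_right hmn, neg_neg, Pi.neg_apply,
    neg_eq_zero]

lemma edgeTerm_reflect (hn : Even n) (y z x : Fin 2 → ℤ) :
    edgeTerm m n (!![1, 0; 0, -1] *ᵥ y) (!![1, 0; 0, -1] *ᵥ z) (!![1, 0; 0, -1] *ᵥ x) =
      edgeTerm m n y z x := by
  simp only [edgeTerm, crossingTerm_reflect hn]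
  simp [mulVec_eq_sum]

lemma edgeSum_swap (hn : Even n) (h k : ℤ) :
    edgeSum m n ![0, 1] ![1, 0] ![h, k] = edgeSum m n ![1, 0] ![0, 1] ![k, h] := by
  have hswap (a b : ℤ) : !![0, 1; 1, 0] *ᵥ ![a, b] = ![b, a] := by simp [-mulVec_cons]
  simpa only [edgeSum, ← mulVec_mulVec, hswap] using finsum_specialLinearGroup_mul_right
    (f := fun A ↦ edgeTerm m n (A *ᵥ ![1, 0]) (A *ᵥ ![0, 1]) (A *ᵥ ![k, h]))
    (e := !![1, 0; 0, -1]) (g := !![0, 1; 1, 0]) (by simp)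
    fun A ↦ by simp only [← mulVec_mulVec, edgeTerm_reflect hn]

lemma edgeTerm_T_zpow (hm : m ≠ 0) {k h : ℤ} (hk : 0 < k) (hh : 0 < h) (c : ℤ) :
    edgeTerm m n ((ModularGroup.T ^ c).1 *ᵥ ![0, 1]) ((ModularGroup.T ^ c).1 *ᵥ ![1, 0])
        ((ModularGroup.T ^ c).1 *ᵥ ![k, h]) =
      if c ∈ Finset.Ico (-(k / h)) 0 then -(h : ℂ) ^ n * ((k + c * h : ℤ) : ℂ) ^ m else 0 := by
  have hmem : c ∈ Finset.Ico (-(k / h)) 0 ↔ 0 ≤ k + c * h ∧ c < 0 := by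
    rw [Finset.mem_Ico, neg_le, Int.le_ediv_iff_mul_le hh, neg_mul, neg_le_iff_add_nonneg, add_comm]
  have hcross : c * (k + c * h) * h < 0 ↔ 0 < k + c * h ∧ c < 0 := by
    rw [mul_comm, ← smul_eq_mul, smul_neg_iff_of_pos_left hh, mul_neg_iff]
    refine ⟨?_, fun ⟨hu, hc⟩ ↦ .inr ⟨hc, hu⟩⟩
    rintro (⟨hc, hu⟩ | ⟨hc, hu⟩)
    · exact absurd hu (by positivity : 0 < k + c * h).not_gt
    · exact ⟨hu, hc⟩
  have hv : (ModularGroup.T ^ c).1 *ᵥ ![k, h] = ![k + c * h, h] := by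
    simp [ModularGroup.coe_T_zpow, -mulVec_cons]
  have hy : (ModularGroup.T ^ c).1 *ᵥ ![0, 1] = ![c, 1] := by
    simp [ModularGroup.coe_T_zpow, -mulVec_cons]
  have hz : (ModularGroup.T ^ c).1 *ᵥ ![1, 0] = ![1, 0] := by
    simp [ModularGroup.coe_T_zpow, -mulVec_cons]
  rw [hv, hy, hz]
  simp only [edgeTerm, crossingTerm, cons_val_zero, cons_val_one, if_true, one_mul, hmem, hcross]
  rcases lt_trichotomy 0 (k + c * h) with hu | hu | hu
  · by_cases hc : c < 0
    · simp [hu, hu.le, hc, Int.sign_eq_neg_one_of_neg, Int.sign_eq_one_of_pos, -Int.cast_add]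
      ring
    · simp [hc]
  · simp [← hu, hm]
  · simp [hu.not_ge, hu.not_gt]

lemma edgeSum_eq_mul_progressionSum (hm : m ≠ 0) (hmn : Even (m + n)) {k h : ℤ} (hk : 0 < k)
    (hh : 0 < h) :
    edgeSum m n ![0, 1] ![1, 0] ![k, h] = -2 * (h : ℂ) ^ n * progressionSum m h k := by
  have hwedge : wedge ![0, 1] ![k, h] ≠ 0 := by simpa [wedge] using hk.ne'
  rw [edgeSum, finsum_eq_two_mul_finsum_T_zpow (hasFiniteSupport_edgeTerm m n _ hwedge)]
  · simp only [edgeTerm_T_zpow hm hk hh]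
    simp only [← finsum_eq_if, finsum_mem_finset_eq_sum, progressionSum, ← Finset.mul_sum]
    ring
  · intro γ
    simp only [SpecialLinearGroup.coe_neg, neg_mulVec, edgeTerm_neg hmn]
  · intro γ hc
    simp [edgeTerm, mulVec, dotProduct, hc]

end EdgeSum

section Dedekind

variable {m n : ℕ} {h k : ℤ}

lemma EwnEven_eq (hh : 0 < h) :
    EwnEven (m + n) n h k = 1 / 2 * crossingSum m n ![1, 0] ![k, h] +
      Bbar (n + 1) ((k : ℚ) / h) / (n + 1) * (h : ℂ) ^ (m + n) -
      Bbar (m + 1) ((k : ℚ) / h) / (m + 1) * (h : ℂ) ^ (m + n) := by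
  rw [EwnEven, Iwn_eq_crossingSum _ _ hh, Nat.add_sub_cancel]

lemma EwnEven_add_self (hh : 0 < h) :
    EwnEven (m + n) n h (k + h) = EwnEven (m + n) n h k := by
  have hdiv : ((k + h : ℤ) : ℚ) / h = (k : ℚ) / h + 1 := by
    have : (h : ℚ) ≠ 0 := mod_cast hh.ne'
    push_cast
    field_simp
  rw [EwnEven_eq hh, EwnEven_eq hh, crossingSum_translate, hdiv, Bbar_add_one, Bbar_add_one]

lemma EwnEven_mul_mul (hh : 0 < h) {c : ℤ} (hc : 0 < c) :
    EwnEven (m + n) n (c * h) (c * k) = (c : ℂ) ^ (m + n) * EwnEven (m + n) n h k := by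
  have hdiv : ((c * k : ℤ) : ℚ) / (c * h : ℤ) = (k : ℚ) / h := by
    have : (c : ℚ) ≠ 0 := mod_cast hc.ne'
    push_cast
    rw [mul_div_mul_left _ _ this]
  have hvec : ![c * k, c * h] = c • ![k, h] := by simp
  rw [EwnEven_eq hh, EwnEven_eq (mul_pos hc hh), hdiv, hvec, crossingSum_smul_right hc]
  push_cast
  ring

lemma EwnEven_neg (hm : Even m) (hm0 : 0 < m) (hn : Even n) (hn0 : 0 < n) (hh : 0 < h) :
    EwnEven (m + n) n h (-k) = -EwnEven (m + n) n h k := by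
  have hdiv : ((-k : ℤ) : ℚ) / h = -((k : ℚ) / h) := by
    push_cast
    rw [neg_div]
  rw [EwnEven_eq hh, EwnEven_eq hh, crossingSum_reflect hn, hdiv, Bbar_neg hm.add_one (by lia),
    Bbar_neg hn.add_one (by lia)]
  ring

lemma crossingSum_add_crossingSum_swap (hm : Even m) (hm0 : 0 < m) (hn : Even n) (hn0 : 0 < n)
    (hh : 0 < h) (hk : 0 < k) :
    crossingSum m n ![1, 0] ![k, h] + crossingSum m n ![1, 0] ![h, k] =
      2 * (h ^ m * progressionSum n h k - h ^ n * progressionSum m h k +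
        (k ^ m * progressionSum n k h - k ^ n * progressionSum m k h)) := by
  have htriangle := crossingSum_add_crossingSum (m := m) (y := ![1, 0]) (z := ![0, 1]) hn
    (by simp [wedge]) hk hh
  have hvec : k • ![1, 0] + h • ![0, 1] = ![k, h] := by simp
  rw [hvec, crossingSum_swap hn, ← edgeSum_swap hn, ← edgeSum_swap hm,
    edgeSum_eq_mul_progressionSum hm0.ne' (hm.add hn) hk hh,
    edgeSum_eq_mul_progressionSum hn0.ne' (hn.add hm) hk hh,
    edgeSum_eq_mul_progressionSum hm0.ne' (hm.add hn) hh hk,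
    edgeSum_eq_mul_progressionSum hn0.ne' (hn.add hm) hh hk] at htriangle
  linear_combination htriangle

lemma EwnEven_add_EwnEven_swap (hm : Even m) (hm0 : 0 < m) (hn : Even n) (hn0 : 0 < n)
    (hh : 0 < h) (hk : 0 < k) :
    EwnEven (m + n) n h k + EwnEven (m + n) n k h = SwnEven (m + n) n h k := by
  rw [EwnEven_eq hh, EwnEven_eq hk, SwnEven, Nat.add_sub_cancel,
    Bpoly_succ_div_mul_pow m n hh hk.le, Bpoly_succ_div_mul_pow m n hk hh.le, add_comm m n,
    Bpoly_succ_div_mul_pow n m hh hk.le, Bpoly_succ_div_mul_pow n m hk hh.le]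
  linear_combination (1 / 2) * crossingSum_add_crossingSum_swap hm hm0 hn hn0 hh hk

end Dedekind

/-- For even `n` with `0 < n < w`, `E_{w,n}` is an odd weighted Dedekind symbol of
weight `w` with reciprocity law `E_{w,n}(h,k) − E_{w,n}(k,−h) = S_{w,n}(h,k)`. -/
theorem EwnEven_isOddDedekindSymbol (w n : ℕ) (hw : Even w) (hw0 : 0 < w)
    (hn : Even n) (hn0 : 0 < n) (hnw : n < w) :
    (∀ h k : ℤ, 0 < h → EwnEven w n h (k + h) = EwnEven w n h k) ∧
    (∀ h k c : ℤ, 0 < h → 0 < c →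
      EwnEven w n (c * h) (c * k) = (c : ℂ) ^ w * EwnEven w n h k) ∧
    (∀ h k : ℤ, 0 < h → EwnEven w n h (-k) = -EwnEven w n h k) ∧
    (∀ h k : ℤ, 0 < h → 0 < k →
      EwnEven w n h k - EwnEven w n k (-h) = SwnEven w n h k) := by
  obtain ⟨m, rfl⟩ := Nat.exists_eq_add_of_le' hnw.le
  have hm : Even m := (Nat.even_add.mp hw).mpr hn
  have hm0 : 0 < m := Nat.pos_of_lt_add_left hnw
  refine ⟨fun h k hh ↦ EwnEven_add_self hh, fun h k c hh hc ↦ EwnEven_mul_mul hh hc,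
    fun h k hh ↦ EwnEven_neg hm hm0 hn hn0 hh, fun h k hh hk ↦ ?_⟩
  rw [EwnEven_neg hm hm0 hn hn0 hk, sub_neg_eq_add, EwnEven_add_EwnEven_swap hm hm0 hn hn0 hh hk]
end
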